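/- Let p be a prime, D a PID in which p is prime, and (N,+,∘) a D-brace of order a power of p with rank_D N < p − 1. Then for every i ≥ 0, Ω_{i+1}(N,+) \ Ω_i(N,+) ⊆ Ω_{i+1}(N,∘) \ Ω_i(N,∘), where Ω_i(G) denotes the set of elements of order dividing p^i. Consequently (N,+) and (N,∘) have the same number of elements of each order, and if (N,∘) is abelian then (N,+) ≅ (N,∘). -/

import Mathlib

/-- A (left) brace structure on an abelian group `N`. -/
structure BraceStruct (N : Type*) [AddCommGroup N] where
  circ : N → N → N
  cinv : N → N
  circ_assoc : ∀ x y z, circ (circ x y) z = circ x (circ y z)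
  zero_circ : ∀ x, circ 0 x = x
  circ_zero : ∀ x, circ x 0 = x
  cinv_circ : ∀ x, circ (cinv x) x = 0
  circ_cinv : ∀ x, circ x (cinv x) = 0
  brace : ∀ x y z, circ x (y + z) = circ x y - x + circ x z

/-- The gamma function of a brace: γ_x(y) = -x + x∘y. -/
def BraceStruct.gamma {N : Type*} [AddCommGroup N] (B : BraceStruct N)
    (x y : N) : N := -x + B.circ x y

/-- A brace whose additive group is an `R`-module is an `R`-brace when every
γ_x is an `R`-module automorphism (equivalently, is `R`-linear). -/
def BraceStruct.IsRBrace (R : Type*) {N : Type*} [Ring R] [AddCommGroup N]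
    [Module R N] (B : BraceStruct N) : Prop :=
  ∀ (x : N) (r : R) (y : N), B.gamma x (r • y) = r • B.gamma x y

/-- The m-fold ∘-power m_∘ a = a ∘ a ∘ ⋯ ∘ a (m factors). -/
def BraceStruct.circPow {N : Type*} [AddCommGroup N] (B : BraceStruct N) :
    ℕ → N → N
  | 0, _ => 0
  | n + 1, a => B.circ a (B.circPow n a)

/-!
Let `δ = γ_a - 1`. Since `(N, +)` and `(N, ∘)` are both `p`-groups, `δ` is nilpotent.
By Cayley–Hamilton, `δ` is a root of a monic polynomial of degree `r = rank_D N`; over the field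
`D / p` a nilpotent root of such a polynomial has vanishing `r`-th power, so `δ ^ r` is a multiple
of `p` in `D[δ]`. Hence all terms of `∑_{k < p} γ_a ^ k = p + ⋯ + δ ^ (p - 1)` after the first are
multiples of `p δ`, the last one because `r < p - 1`, and the sum is `p` times an automorphism.
As the sum maps `a` to its `p`-th circle power, that power has additive order `p ^ i` exactly when
`a` has additive order `p ^ (i + 1)`, and induction on `i` identifies the torsion of the two groups.
-/

open Polynomial

section Nilpotent

theorem pow_natDegree_eq_zero_of_aeval_eq_zero {k B : Type*} [Field k] [Ring B] [Algebra k B]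
    {x : B} (hx : IsNilpotent x) {f : k[X]} (hf : f ≠ 0) (hfx : aeval x f = 0) :
    x ^ f.natDegree = 0 := by
  obtain ⟨n, hn⟩ := hx
  obtain ⟨j, -, hj⟩ := (dvd_prime_pow prime_X n).1 (minpoly.dvd k x (by simpa using hn))
  have hjf : j ≤ f.natDegree := by
    simpa using natDegree_le_of_dvd (hj.symm.dvd.trans (minpoly.dvd k x hfx)) hf
  refine pow_eq_zero_of_le hjf ?_
  simpa using aeval_eq_zero_of_dvd_aeval_eq_zero hj.dvd (minpoly.aeval k x)

variable {D A : Type*} [CommRing D] [CommRing A] [Algebra D A]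

theorem pow_natDegree_mem_map_of_aeval_eq_zero (I : Ideal D) [I.IsMaximal] {x : A}
    (hx : IsNilpotent x) {f : D[X]} (hf : f.Monic) (hfx : aeval x f = 0) :
    x ^ f.natDegree ∈ I.map (algebraMap D A) := by
  let : Field (D ⧸ I) := Ideal.Quotient.field I
  let J := I.map (algebraMap D A)
  have hroot : aeval (Ideal.Quotient.mk J x) (f.map (algebraMap D (D ⧸ I))) = 0 := by
    rw [aeval_map_algebraMap, ← Ideal.Quotient.algebraMap_eq, aeval_algebraMap_apply, hfx,
      map_zero]
  have hpow := pow_natDegree_eq_zero_of_aeval_eq_zero (hx.map (Ideal.Quotient.mk J))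
    (hf.map (algebraMap D (D ⧸ I))).ne_zero hroot
  rwa [hf.natDegree_map, ← map_pow, Ideal.Quotient.eq_zero_iff_mem] at hpow

theorem pow_spanFinrank_mem_map (N : Type*) [AddCommGroup N] [Module D N] [Module.Finite D N]
    [Module A N] [IsScalarTower D A N] [FaithfulSMul A N] (I : Ideal D) [I.IsMaximal] {x : A}
    (hx : IsNilpotent x) :
    x ^ (⊤ : Submodule D N).spanFinrank ∈ I.map (algebraMap D A) := by
  obtain ⟨f, hf, hdeg, hfx⟩ :=
    LinearMap.exists_monic_and_natDegree_eq_and_aeval_eq_zero D (Algebra.lsmul D D N x)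
  have hfx' : aeval x f = 0 := FaithfulSMul.eq_of_smul_eq_smul (α := N) fun y => by
    rw [aeval_algHom_apply] at hfx
    simpa using LinearMap.congr_fun hfx y
  exact hdeg ▸ pow_natDegree_mem_map_of_aeval_eq_zero I hx hf hfx'

end Nilpotent

section GeometricSum

variable {A : Type*} [CommRing A] {p : ℕ}

theorem isNilpotent_sub_one_of_pow_prime_pow_eq_one (hp : p.Prime) (hpA : IsNilpotent (p : A))
    {a : A} {m : ℕ} (ha : a ^ p ^ m = 1) : IsNilpotent (a - 1) := by
  obtain ⟨s, hs⟩ := exists_add_pow_prime_pow_eq hp (a - 1) 1 m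
  have hpow : (a - 1) ^ p ^ m = p * (-(a - 1) * s) := by
    rw [sub_add_cancel, ha] at hs
    linear_combination -hs
  exact IsNilpotent.of_pow (hpow ▸ (Commute.all _ _).isNilpotent_mul_right hpA)

theorem geom_sum_add_one_eq_sum_choose (x : A) (n : ℕ) :
    ∑ k ∈ Finset.range n, (x + 1) ^ k = ∑ k ∈ Finset.range n, (n.choose (k + 1) : A) * x ^ k := by
  simpa [eval_finsetSum] using congrArg (eval x) (geom_sum_X_comp_X_add_one_eq_sum (R := A) n)

theorem natCast_mul_dvd_geom_sum_sub (hp : p.Prime) (x : A) :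
    (p : A) * x ∣ ∑ k ∈ Finset.range p, (x + 1) ^ k - p - x ^ (p - 1) := by
  rw [geom_sum_add_one_eq_sum_choose]
  obtain ⟨t, rfl⟩ := Nat.exists_eq_add_of_le' hp.two_le
  have hmid : ((t + 2 : ℕ) : A) * x ∣
      ∑ k ∈ Finset.range t, ((t + 2).choose (k + 1 + 1) : A) * x ^ (k + 1) :=
    Finset.dvd_sum fun k hk => mul_dvd_mul
      (Nat.cast_dvd_cast (hp.dvd_choose_self (by lia) (by grind))) (dvd_pow_self x k.succ_ne_zero)
  rw [Finset.sum_range_succ, Finset.sum_range_succ']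
  convert hmid using 1
  simp only [zero_add, Nat.choose_one_right, Nat.choose_self, Nat.cast_one, pow_zero,
    Nat.add_succ_sub_one]
  ring

theorem associated_geom_sum_of_mul_dvd_pow (hp : p.Prime) {a : A} (ha : IsNilpotent (a - 1))
    (hdvd : (p : A) * (a - 1) ∣ (a - 1) ^ (p - 1)) :
    Associated (p : A) (∑ k ∈ Finset.range p, a ^ k) := by
  obtain ⟨h, hh⟩ : (p : A) * (a - 1) ∣ ∑ k ∈ Finset.range p, a ^ k - p := by
    simpa using dvd_add (natCast_mul_dvd_geom_sum_sub hp (a - 1)) hdvd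
  have hu : IsUnit (1 + (a - 1) * h) :=
    ((Commute.all _ _).isNilpotent_mul_right ha).isUnit_one_add
  refine ⟨hu.unit, ?_⟩
  rw [hu.unit_spec]
  linear_combination -hh

variable {D N : Type*} [CommRing D] [AddCommGroup N] [Module D N] [Module.Finite D N]

theorem associated_geom_sum_of_spanFinrank_lt (hp : p.Prime)
    (hpD : (Ideal.span {(p : D)}).IsMaximal)
    (hrank : (⊤ : Submodule D N).spanFinrank < p - 1)
    (hpN : IsNilpotent (p : Module.End D N)) {α : Module.End D N} {m : ℕ}
    (hα : α ^ p ^ m = 1) :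
    Associated (p : Module.End D N) (∑ k ∈ Finset.range p, α ^ k) := by
  let A := Algebra.adjoin D {α}
  let a : A := ⟨α, Algebra.self_mem_adjoin_singleton D α⟩
  have hval : Function.Injective A.val := Subtype.val_injective
  have hpA : IsNilpotent (p : A) := (IsNilpotent.map_iff hval).1 (by simpa using hpN)
  have hnil : IsNilpotent (a - 1) :=
    isNilpotent_sub_one_of_pow_prime_pow_eq_one hp hpA (m := m) (Subtype.ext hα)
  have hdvd : (p : A) ∣ (a - 1) ^ (⊤ : Submodule D N).spanFinrank := by
    simpa [Ideal.map_span, Ideal.mem_span_singleton] using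
      pow_spanFinrank_mem_map N (Ideal.span {(p : D)}) hnil
  have hdvd' : (p : A) * (a - 1) ∣ (a - 1) ^ (p - 1) :=
    (mul_dvd_mul_right hdvd _).trans (pow_succ (a - 1) _ ▸ pow_dvd_pow _ hrank)
  simpa [a] using (associated_geom_sum_of_mul_dvd_pow hp hnil hdvd').map A.val

end GeometricSum

section AbelianGroup

theorem ncard_nsmul_eq_zero_congr {G H : Type*} [AddCommGroup G] [AddCommGroup H] (e : G ≃+ H)
    (k : ℕ) : {a : G | k • a = 0}.ncard = {b : H | k • b = 0}.ncard :=
  Set.ncard_congr' (e.toEquiv.subtypeEquiv fun a => by simp [← map_nsmul])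

theorem ncard_nsmul_eq_zero_pi_zmod {ι : Type*} [Fintype ι] (n : ι → ℕ) [∀ i, NeZero (n i)]
    (k : ℕ) : {a : (i : ι) → ZMod (n i) | k • a = 0}.ncard = ∏ i, (n i).gcd k := by
  have hpi : {a : (i : ι) → ZMod (n i) | k • a = 0} =
      Set.univ.pi fun i => ((nsmulAddMonoidHom k : ZMod (n i) →+ _).ker : Set (ZMod (n i))) := by
    ext a
    simp [funext_iff, Set.mem_pi]
  rw [hpi, ← Nat.card_coe_set_eq, Nat.card_congr (Equiv.Set.univPi _), Nat.card_pi]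
  refine Finset.prod_congr rfl fun i _ => ?_
  simpa using IsAddCyclic.card_nsmulAddMonoidHom_ker (ZMod (n i)) k

theorem ncard_pow_nsmul_eq_zero_pi_zmod {ι : Type*} [Fintype ι] (p : ℕ) [NeZero p] (e : ι → ℕ)
    (k : ℕ) :
    {a : (i : ι) → ZMod (p ^ e i) | p ^ k • a = 0}.ncard = p ^ ∑ i, min (e i) k := by
  rw [ncard_nsmul_eq_zero_pi_zmod, ← Finset.prod_pow_eq_pow_sum]
  refine Finset.prod_congr rfl fun i _ => ?_
  rcases le_total (e i) k with h | h
  · rw [min_eq_left h, Nat.gcd_eq_left (pow_dvd_pow p h)]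
  · rw [min_eq_right h, Nat.gcd_eq_right (pow_dvd_pow p h)]

theorem exists_addEquiv_pi_zmod_prime_pow {G : Type*} [AddCommGroup G] {p m : ℕ} (hp : p.Prime)
    (hG : Nat.card G = p ^ m) :
    ∃ (ι : Type) (_ : Fintype ι) (e : ι → ℕ), (∀ i, e i ≠ 0) ∧
      Nonempty (G ≃+ ((i : ι) → ZMod (p ^ e i))) := by
  have : Finite G := Nat.finite_of_card_ne_zero (hG ▸ pow_ne_zero m hp.ne_zero)
  obtain ⟨ι, _, n, hn, ⟨f⟩⟩ := AddCommGroup.equiv_directSum_zmod_of_finite' G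
  classical
  let g := f.trans (DirectSum.addEquivProd fun i => ZMod (n i))
  have hprod : ∏ i, n i = p ^ m := by
    rw [← hG, Nat.card_congr g.toEquiv, Nat.card_pi]
    simp
  choose e _ he using fun i =>
    (Nat.dvd_prime_pow hp).1 (hprod ▸ Finset.dvd_prod_of_mem n (Finset.mem_univ i))
  obtain rfl : n = fun i => p ^ e i := funext he
  exact ⟨ι, ‹_›, e, fun i hi => by simpa [hi] using hn i, ⟨g⟩⟩

theorem two_mul_sum_min_add_one {ι : Type*} [Fintype ι] (u : ι → ℕ) (k : ℕ) :
    2 * ∑ i, min (u i) (k + 1) =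
      ∑ i, min (u i) k + ∑ i, min (u i) (k + 2) + Fintype.card {i // u i = k + 1} := by
  rw [Fintype.card_subtype, Finset.card_filter, Finset.mul_sum, ← Finset.sum_add_distrib,
    ← Finset.sum_add_distrib]
  exact Finset.sum_congr rfl fun i _ => by grind

theorem exists_equiv_of_sum_min_eq {ι κ : Type*} [Fintype ι] [Fintype κ] {e : ι → ℕ} {f : κ → ℕ}
    (he : ∀ i, e i ≠ 0) (hf : ∀ j, f j ≠ 0)
    (h : ∀ k, ∑ i, min (e i) k = ∑ j, min (f j) k) :
    ∃ σ : ι ≃ κ, ∀ i, f (σ i) = e i := by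
  have hcard : ∀ k, Fintype.card {i // e i = k} = Fintype.card {j // f j = k} := by
    rintro (_ | k)
    · simp [he, hf]
    · have he' := two_mul_sum_min_add_one e k
      have hf' := two_mul_sum_min_add_one f k
      simp only [h] at he'
      lia
  exact ⟨Equiv.ofFiberEquiv fun k => Fintype.equivOfCardEq (hcard k), Equiv.ofFiberEquiv_map _⟩

theorem nonempty_addEquiv_of_ncard_pow_nsmul_eq_zero_eq {G H : Type*} [AddCommGroup G]
    [AddCommGroup H] {p m n : ℕ} (hp : p.Prime) (hG : Nat.card G = p ^ m)
    (hH : Nat.card H = p ^ n)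
    (h : ∀ k : ℕ, {a : G | p ^ k • a = 0}.ncard = {b : H | p ^ k • b = 0}.ncard) :
    Nonempty (G ≃+ H) := by
  have : NeZero p := ⟨hp.ne_zero⟩
  obtain ⟨ι, _, e, he, ⟨u⟩⟩ := exists_addEquiv_pi_zmod_prime_pow hp hG
  obtain ⟨κ, _, f, hf, ⟨v⟩⟩ := exists_addEquiv_pi_zmod_prime_pow hp hH
  have hsum : ∀ k, ∑ i, min (e i) k = ∑ j, min (f j) k := fun k => by
    apply Nat.pow_right_injective hp.two_le
    simpa only [ncard_nsmul_eq_zero_congr u, ncard_nsmul_eq_zero_congr v,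
      ncard_pow_nsmul_eq_zero_pi_zmod] using h k
  obtain ⟨σ, hσ⟩ := exists_equiv_of_sum_min_eq he hf hsum
  let w := (AddEquiv.piCongrRight fun i => (ZMod.ringEquivCongr (by rw [hσ i])).toAddEquiv).trans
    (RingEquiv.piCongrLeft (fun j => ZMod (p ^ f j)) σ).toAddEquiv
  exact ⟨u.trans (w.trans v.symm)⟩

end AbelianGroup

theorem spanFinrank_top_le_card_of_equiv_pi_quotient {D N ι : Type*} [CommRing D] [AddCommGroup N]
    [Module D N] [Fintype ι] (I : ι → Ideal D) (e : N ≃ₗ[D] ((i : ι) → D ⧸ I i)) :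
    (⊤ : Submodule D N).spanFinrank ≤ Fintype.card ι := by
  let f : (ι → D) →ₗ[D] N := e.symm.toLinearMap ∘ₗ LinearMap.piMap fun i => (I i).mkQ
  have hf : Function.Surjective f :=
    e.symm.surjective.comp (Function.Surjective.piMap fun i => (I i).mkQ_surjective)
  classical
  have hspan : Submodule.span D (Set.range (f ∘ Pi.basisFun D ι)) = ⊤ := by
    rw [Set.range_comp, Submodule.span_image, (Pi.basisFun D ι).span_eq, Submodule.map_top,
      LinearMap.range_eq_top.2 hf]
  rw [← hspan]
  exact (Submodule.spanFinrank_span_le_ncard_of_finite (Set.finite_range _)).trans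
    ((Finite.card_range_le _).trans_eq Nat.card_eq_fintype_card)

namespace BraceStruct

variable {N : Type*} [AddCommGroup N] (B : BraceStruct N)

/-- The circle group `(N, ∘)` of a brace, as a type synonym of `N` so that its group structure can
be written multiplicatively next to the additive group `N`. -/
def Circ (_ : BraceStruct N) : Type _ := N

/-- The identity map from `(N, +)` to `(N, ∘)`. -/
def toCirc : N ≃ B.Circ := Equiv.refl N

instance : Group B.Circ where
  mul := B.circ
  one := (0 : N)
  inv := B.cinv
  mul_assoc := B.circ_assoc
  one_mul := B.zero_circ
  mul_one := B.circ_zero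
  inv_mul_cancel := B.cinv_circ

theorem toCirc_zero : B.toCirc 0 = 1 := rfl

theorem toCirc_circ (x y : N) : B.toCirc (B.circ x y) = B.toCirc x * B.toCirc y := rfl

theorem toCirc_circPow (n : ℕ) (a : N) : B.toCirc (B.circPow n a) = B.toCirc a ^ n := by
  induction n with
  | zero => simp [circPow, toCirc_zero]
  | succ n ih => rw [circPow, toCirc_circ, ih, pow_succ']

theorem circPow_eq_zero_iff (n : ℕ) (a : N) : B.circPow n a = 0 ↔ B.toCirc a ^ n = 1 := by
  rw [← toCirc_circPow, ← toCirc_zero, B.toCirc.apply_eq_iff_eq]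

theorem circPow_mul (n k : ℕ) (a : N) : B.circPow (n * k) a = B.circPow k (B.circPow n a) :=
  B.toCirc.injective (by simp only [toCirc_circPow, pow_mul])

theorem circ_eq_add_gamma (x y : N) : B.circ x y = x + B.gamma x y := by
  simp [gamma]

theorem gamma_add (x y z : N) : B.gamma x (y + z) = B.gamma x y + B.gamma x z := by
  simp only [gamma, B.brace]
  abel

theorem gamma_circ (x y z : N) : B.gamma (B.circ x y) z = B.gamma x (B.gamma y z) := by
  have h := B.circ_assoc x y z
  rw [B.circ_eq_add_gamma (B.circ x y), B.circ_eq_add_gamma x (B.circ y z), B.circ_eq_add_gamma y z,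
    gamma_add, B.circ_eq_add_gamma x y, add_assoc, add_right_inj, add_right_inj] at h
  rwa [← B.circ_eq_add_gamma x y] at h

section RBrace

variable {R : Type*} [CommRing R] [Module R N] {B}

/-- The gamma function `x ↦ γ_x` of an `R`-brace, as a representation of the circle group. -/
def gammaHom (hB : B.IsRBrace R) : B.Circ →* Module.End R N where
  toFun x :=
    { toFun := B.gamma (B.toCirc.symm x)
      map_add' := B.gamma_add _
      map_smul' := hB _ }
  map_one' := LinearMap.ext fun y => by
    change -0 + B.circ 0 y = y
    simp [B.zero_circ]
  map_mul' x y := LinearMap.ext (B.gamma_circ (B.toCirc.symm x) (B.toCirc.symm y))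

theorem circPow_eq_geom_sum (hB : B.IsRBrace R) (n : ℕ) (a : N) :
    B.circPow n a = (∑ k ∈ Finset.range n, gammaHom hB (B.toCirc a) ^ k) a := by
  induction n with
  | zero => simp [circPow]
  | succ n ih =>
    rw [circPow, circ_eq_add_gamma, ih, geom_sum_succ, add_comm]
    rfl

theorem exists_unit_circPow_prime_eq {p m : ℕ} (hp : p.Prime)
    (hpR : (Ideal.span {(p : R)}).IsMaximal) (hB : B.IsRBrace R) (hcard : Nat.card N = p ^ m)
    (hrank : (⊤ : Submodule R N).spanFinrank < p - 1) (a : N) :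
    ∃ u : (Module.End R N)ˣ, B.circPow p a = p • u.val a := by
  have : Finite N := Nat.finite_of_card_ne_zero (hcard ▸ pow_ne_zero m hp.ne_zero)
  have hpN : IsNilpotent (p : Module.End R N) := ⟨m, LinearMap.ext fun x => by
    rw [← Nat.cast_pow, Module.End.natCast_apply, ← hcard, card_nsmul_eq_zero',
      LinearMap.zero_apply]⟩
  have hα : gammaHom hB (B.toCirc a) ^ p ^ m = 1 := by
    have hcirc : Nat.card B.Circ = p ^ m := (Nat.card_congr B.toCirc).symm.trans hcard
    rw [← map_pow, ← hcirc, pow_card_eq_one', map_one]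
  obtain ⟨u, hu⟩ := associated_geom_sum_of_spanFinrank_lt hp hpR hrank hpN hα
  exact ⟨u, by rw [circPow_eq_geom_sum hB, ← hu, Module.End.mul_apply, Module.End.natCast_apply]⟩

theorem pow_nsmul_eq_zero_iff_circPow_eq_zero {p m : ℕ} (hp : p.Prime)
    (hpR : (Ideal.span {(p : R)}).IsMaximal) (hB : B.IsRBrace R) (hcard : Nat.card N = p ^ m)
    (hrank : (⊤ : Submodule R N).spanFinrank < p - 1) (i : ℕ) (a : N) :
    p ^ i • a = 0 ↔ B.circPow (p ^ i) a = 0 := by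
  induction i generalizing a with
  | zero => simp [circPow_eq_zero_iff, ← toCirc_zero]
  | succ i ih =>
    obtain ⟨u, hu⟩ := exists_unit_circPow_prime_eq hp hpR hB hcard hrank a
    have hinj : Function.Injective u.val := ((Module.End.isUnit_iff _).1 u.isUnit).1
    rw [pow_succ' p i, circPow_mul, ← ih, hu, smul_smul, ← pow_succ, ← pow_succ', ← map_nsmul,
      map_eq_zero_iff _ hinj]

end RBrace

theorem exists_equiv_map_add_eq_circ {p m : ℕ} (hp : p.Prime) (hcard : Nat.card N = p ^ m)
    (hcomm : ∀ x y : N, B.circ x y = B.circ y x)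
    (h : ∀ i : ℕ, {a : N | p ^ i • a = 0}.ncard = {a : N | B.circPow (p ^ i) a = 0}.ncard) :
    ∃ e : N ≃ N, ∀ x y : N, e (x + y) = B.circ (e x) (e y) := by
  let : CommGroup B.Circ := { mul_comm := hcomm }
  let toAdd : N ≃ Additive B.Circ := B.toCirc.trans Additive.ofMul
  have hncard (i : ℕ) :
      {a : N | B.circPow (p ^ i) a = 0}.ncard = {b : Additive B.Circ | p ^ i • b = 0}.ncard :=
    Set.ncard_congr' (toAdd.subtypeEquiv fun a => B.circPow_eq_zero_iff (p ^ i) a)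
  obtain ⟨e⟩ := nonempty_addEquiv_of_ncard_pow_nsmul_eq_zero_eq hp hcard
    ((Nat.card_congr toAdd).symm.trans hcard) fun i => (h i).trans (hncard i)
  exact ⟨e.toEquiv.trans toAdd.symm, map_add e⟩

end BraceStruct

theorem small_rank_D_brace_general {D : Type*} [CommRing D] {p : ℕ} (hp : p.Prime)
    (hpD : (Ideal.span {(p : D)}).IsMaximal) {N : Type*} [AddCommGroup N] [Module D N]
    (B : BraceStruct N) (hB : B.IsRBrace D) {m : ℕ} (hcard : Nat.card N = p ^ m)
    (hrank : (⊤ : Submodule D N).spanFinrank < p - 1) :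
    (∀ (i : ℕ) (a : N), p ^ (i + 1) • a = 0 → ¬ p ^ i • a = 0 →
        B.circPow (p ^ (i + 1)) a = 0 ∧ ¬ B.circPow (p ^ i) a = 0) ∧
    (∀ i : ℕ, Set.ncard {a : N | p ^ i • a = 0}
        = Set.ncard {a : N | B.circPow (p ^ i) a = 0}) ∧
    ((∀ x y : N, B.circ x y = B.circ y x) →
      ∃ e : N ≃ N, ∀ x y : N, e (x + y) = B.circ (e x) (e y)) := by
  have htors := BraceStruct.pow_nsmul_eq_zero_iff_circPow_eq_zero hp hpD hB hcard hrank
  have hncard (i : ℕ) :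
      {a : N | p ^ i • a = 0}.ncard = {a : N | B.circPow (p ^ i) a = 0}.ncard := by
    simp only [htors]
  refine ⟨fun i a hlt hge => ?_, hncard, fun hcomm => ?_⟩
  · exact ⟨(htors (i + 1) a).1 hlt, mt (htors i a).2 hge⟩
  · exact B.exists_equiv_map_add_eq_circ hp hcard hcomm hncard

/-- let p be a prime, D a PID in which p is prime, and N a
D-brace of order a power of p with rank_D N = r < p − 1 (N decomposes as a sum
of r indecomposable cyclic D-modules D/(p^{c_i})). Then for every i ≥ 0,
Ω_{i+1}(N,+) \ Ω_i(N,+) ⊆ Ω_{i+1}(N,∘) \ Ω_i(N,∘); consequently (N,+) and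
(N,∘) have the same number of elements of each order, and if (N,∘) is abelian
then (N,+) ≅ (N,∘). -/
theorem small_rank_D_brace
    {D : Type*} [CommRing D] [IsDomain D] [IsPrincipalIdealRing D]
    (p : ℕ) (hp : p.Prime) (hpD : Prime (p : D))
    {N : Type*} [AddCommGroup N] [Module D N]
    (B : BraceStruct N) (hB : B.IsRBrace D)
    (m : ℕ) (hcard : Nat.card N = p ^ m)
    (r : ℕ) (c : Fin r → ℕ) (hc : ∀ i, 1 ≤ c i)
    (hdec : Nonempty
      (N ≃ₗ[D] ((i : Fin r) → D ⧸ Ideal.span {(p : D) ^ c i})))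
    (hrank : r < p - 1) :
    (∀ (i : ℕ) (a : N), p ^ (i + 1) • a = 0 → ¬ p ^ i • a = 0 →
        B.circPow (p ^ (i + 1)) a = 0 ∧ ¬ B.circPow (p ^ i) a = 0) ∧
    (∀ i : ℕ, Set.ncard {a : N | p ^ i • a = 0}
        = Set.ncard {a : N | B.circPow (p ^ i) a = 0}) ∧
    ((∀ x y : N, B.circ x y = B.circ y x) →
      ∃ e : N ≃ N, ∀ x y : N, e (x + y) = B.circ (e x) (e y)) := by
  obtain ⟨e⟩ := hdec
  have hle : (⊤ : Submodule D N).spanFinrank ≤ r := by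
    simpa using spanFinrank_top_le_card_of_equiv_pi_quotient _ e
  exact small_rank_D_brace_general hp (PrincipalIdealRing.isMaximal_of_irreducible hpD.irreducible)
    B hB hcard (hle.trans_lt hrank)
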